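/- Let L ≥ 1. With Y_π = ∏_{j=1}^{L} exp(−iπSʸ_j), Y'_π = ∏_{j=1}^{L} exp(−i(π/2)Sʸ_j), and Z'_π = ∏_{j=1}^{L} exp(−i(π/2)σᶻ_j), the operator identity Y'_π Z'_π = Y_π Z'_π Y'_π holds on (ℂ³)^{⊗L}. -/

import Mathlib

noncomputable section
open Complex Matrix

/-- The Hilbert space operators of the `L`-site spin-1 chain: matrices on `(ℂ³)^{⊗L}`,
with the tensor factors indexed by sites and the single-site ordered basis `(|+⟩,|0⟩,|−⟩)`. -/
abbrev Op (L : ℕ) : Type := Matrix (Fin L → Fin 3) (Fin L → Fin 3) ℂ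

/-- The spin-1 matrix `Sˣ`. -/
def Sx : Matrix (Fin 3) (Fin 3) ℂ :=
  ((Real.sqrt 2 : ℝ) : ℂ)⁻¹ • !![0, 1, 0; 1, 0, 1; 0, 1, 0]

/-- The spin-1 matrix `Sʸ`. -/
def Sy : Matrix (Fin 3) (Fin 3) ℂ :=
  ((Real.sqrt 2 : ℝ) : ℂ)⁻¹ • !![0, -I, 0; I, 0, -I; 0, I, 0]

/-- The spin-1 matrix `Sᶻ = diag(1,0,−1)`. -/
def Sz : Matrix (Fin 3) (Fin 3) ℂ := !![1, 0, 0; 0, 0, 0; 0, 0, -1]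

/-- `site A j` is the one-site operator `A` acting on site `j` and identity elsewhere. -/
def site {L : ℕ} (A : Matrix (Fin 3) (Fin 3) ℂ) (j : Fin L) : Op L :=
  Matrix.of fun f g => ∏ k : Fin L, if k = j then A (f k) (g k) else (if f k = g k then 1 else 0)

/-- One factor `exp(iπ Sᶻ_u Sˣ_v)` of the Kennedy–Tasaki transformation. -/
def ktFactor {L : ℕ} (u v : Fin L) : Op L :=
  NormedSpace.exp (((Real.pi : ℂ) * I) • (site Sz u * site Sx v))

/-- The Kennedy–Tasaki transformation `U_KT = ∏_{1 ≤ u < v ≤ L} exp(iπ Sᶻ_u Sˣ_v)`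
(the factors pairwise commute, so the ordering is immaterial). -/
def UKT (L : ℕ) : Op L :=
  ((List.finRange L).map fun u =>
    ((List.finRange L).map fun v => if u < v then ktFactor u v else 1).prod).prod

/-- The p-wave basis vector `|↑⟩ = (|+⟩ − |−⟩)/√2`. -/
def up : Fin 3 → ℂ := ![((Real.sqrt 2 : ℝ) : ℂ)⁻¹, 0, -((Real.sqrt 2 : ℝ) : ℂ)⁻¹]

/-- The p-wave basis vector `|↓⟩ = |0⟩`. -/
def down : Fin 3 → ℂ := ![0, 1, 0]

/-- The p-wave basis vector `|h⟩ = (|+⟩ + |−⟩)/√2`. -/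
def hole : Fin 3 → ℂ := ![((Real.sqrt 2 : ℝ) : ℂ)⁻¹, 0, ((Real.sqrt 2 : ℝ) : ℂ)⁻¹]

/-- The rank-one operator `|a⟩⟨b|`. -/
def ketbra (a b : Fin 3 → ℂ) : Matrix (Fin 3) (Fin 3) ℂ := Matrix.vecMulVec a (star b)

/-- `σˣ = |↑⟩⟨↓| + |↓⟩⟨↑|` (annihilating `|h⟩`). -/
def sigx : Matrix (Fin 3) (Fin 3) ℂ := ketbra up down + ketbra down up

/-- `σʸ = −i|↑⟩⟨↓| + i|↓⟩⟨↑|` (annihilating `|h⟩`). -/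
def sigy : Matrix (Fin 3) (Fin 3) ℂ := (-I) • ketbra up down + I • ketbra down up

/-- `σᶻ = |↑⟩⟨↑| − |↓⟩⟨↓|` (annihilating `|h⟩`). -/
def sigz : Matrix (Fin 3) (Fin 3) ℂ := ketbra up up - ketbra down down

/-- `n = |↑⟩⟨↑| + |↓⟩⟨↓|` (annihilating `|h⟩`). -/
def nMat : Matrix (Fin 3) (Fin 3) ℂ := ketbra up up + ketbra down down

/-- `h = |h⟩⟨h|`. -/
def hMat : Matrix (Fin 3) (Fin 3) ℂ := ketbra hole hole

/-- `P = ⊗_{j=1}^L n_j`, the orthogonal projection onto the hole-free subspace. -/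
def Pproj (L : ℕ) : Op L := Matrix.of fun f g => ∏ k : Fin L, nMat (f k) (g k)

/-- The Heisenberg coupling `S_j · S_k`. -/
def heis {L : ℕ} (j k : Fin L) : Op L :=
  site Sx j * site Sx k + site Sy j * site Sy k + site Sz j * site Sz k

/-- The bilinear-biquadratic Hamiltonian
`H_BLBQ(θ) = Σ_{j=1}^{L−1} [cosθ (S_j·S_{j+1}) + sinθ (S_j·S_{j+1})²]`. -/
def HBLBQ (L : ℕ) (θ : ℝ) : Op L :=
  ∑ j : Fin L, if h : (j : ℕ) + 1 < L then
    ((Real.cos θ : ℝ) : ℂ) • heis j ⟨(j : ℕ) + 1, h⟩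
      + ((Real.sin θ : ℝ) : ℂ) • (heis j ⟨(j : ℕ) + 1, h⟩) ^ 2
  else 0

/-- The self-dual Hamiltonian `H_SD(θ) = H_BLBQ(θ) + U_KT H_BLBQ(θ) U_KT`. -/
def HSD (L : ℕ) (θ : ℝ) : Op L := HBLBQ L θ + UKT L * HBLBQ L θ * UKT L

/-- The spin-1/2 XXZ Hamiltonian written in the p-wave basis:
`H_XXZ(θ) = (cosθ−sinθ) Σ_j (−σˣ_jσˣ_{j+1} + σʸ_jσʸ_{j+1}) + sinθ Σ_j σᶻ_jσᶻ_{j+1}`. -/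
def HXXZ (L : ℕ) (θ : ℝ) : Op L :=
  ((Real.cos θ - Real.sin θ : ℝ) : ℂ) •
    (∑ j : Fin L, if h : (j : ℕ) + 1 < L then
      -(site sigx j * site sigx ⟨(j : ℕ) + 1, h⟩) + site sigy j * site sigy ⟨(j : ℕ) + 1, h⟩
    else 0)
  + ((Real.sin θ : ℝ) : ℂ) •
    (∑ j : Fin L, if h : (j : ℕ) + 1 < L then
      site sigz j * site sigz ⟨(j : ℕ) + 1, h⟩
    else 0)

/-- The global product `∏_{j=1}^L exp(c • A_j)` of commuting single-site exponentials. -/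
def globalProd (L : ℕ) (A : Matrix (Fin 3) (Fin 3) ℂ) (c : ℂ) : Op L :=
  ((List.finRange L).map fun j => NormedSpace.exp (c • site A j)).prod

/-- The symmetry flux `F^y_j = exp(−iπ Σ_{k<j} Sʸ_k) · Sʸ_j`. -/
def fluxY (L : ℕ) (j : Fin L) : Op L :=
  NormedSpace.exp ((-((Real.pi : ℂ) * I)) •
    ∑ k : Fin L, if (k : ℕ) < (j : ℕ) then site Sy k else 0) * site Sy j


/-! The matrix `Sʸ` is the Pauli matrix `σʸ` of the p-wave doublet `|↑⟩, |↓⟩`, so it anticommutes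
with `σᶻ` and satisfies `Sʸ(σᶻ)² = Sʸ`. The second relation gives
`Sʸ exp(dσᶻ) = cosh d Sʸ + sinh d Sʸσᶻ`. When `cosh d = 0`, as for `d = −iπ/2`, this is odd in `d`,
so `v = exp(dσᶻ)` anticommutes with `Sʸ`. Therefore `v exp(cSʸ) = exp(−cSʸ) v`, i.e.
`exp(cSʸ) v = exp(2cSʸ) v exp(cSʸ)` on a single site. All three global operators are `L`-fold tensor
powers of the corresponding one-site exponentials, and tensor powers are multiplicative. -/

section BanachAlgebra

variable {𝔸 : Type*} [NormedRing 𝔸] [NormedAlgebra ℂ 𝔸] [CompleteSpace 𝔸]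

theorem semiconjBy_exp_right {x a b : 𝔸} (h : SemiconjBy x a b) :
    SemiconjBy x (NormedSpace.exp a) (NormedSpace.exp b) := by
  let : NormedAlgebra ℚ 𝔸 := NormedAlgebra.restrictScalars ℚ ℂ 𝔸
  exact h.exp_right

theorem mul_exp_of_mul_eq_smul {x a : 𝔸} {c : ℂ} (h : x * a = c • x) :
    x * NormedSpace.exp a = Complex.exp c • x := by
  have hsemi : SemiconjBy x a (algebraMap ℂ 𝔸 c) := h.trans (Algebra.smul_def c x)
  rw [(semiconjBy_exp_right hsemi).eq, ← NormedSpace.algebraMap_exp_comm, ← Algebra.smul_def,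
    Complex.exp_eq_exp_ℂ]

theorem mul_exp_smul_of_mul_sq_eq_self {x z : 𝔸} (h : x * z ^ 2 = x) (c : ℂ) :
    x * NormedSpace.exp (c • z) = Complex.cosh c • x + Complex.sinh c • (x * z) := by
  have hxzz : x * z * z = x := by rw [mul_assoc, ← sq, h]
  have hplus : (x + x * z) * NormedSpace.exp (c • z) = Complex.exp c • (x + x * z) :=
    mul_exp_of_mul_eq_smul <| by rw [mul_smul_comm, add_mul, hxzz, add_comm]
  have hminus : (x - x * z) * NormedSpace.exp (c • z) = Complex.exp (-c) • (x - x * z) :=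
    mul_exp_of_mul_eq_smul <| by rw [mul_smul_comm, sub_mul, hxzz, neg_smul, ← smul_neg, neg_sub]
  calc x * NormedSpace.exp (c • z)
      = (2⁻¹ : ℂ) • ((x + x * z) * NormedSpace.exp (c • z)
          + (x - x * z) * NormedSpace.exp (c • z)) := by
        rw [← add_mul, add_add_sub_cancel, ← two_smul ℂ x, smul_mul_assoc,
          inv_smul_smul₀ two_ne_zero]
    _ = Complex.cosh c • x + Complex.sinh c • (x * z) := by
        rw [hplus, hminus, Complex.cosh, Complex.sinh]
        module

theorem exp_smul_semiconjBy_neg_of_cosh_eq_zero {x z : 𝔸} {d : ℂ} (hanti : SemiconjBy x z (-z))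
    (hsq : x * z ^ 2 = x) (hd : Complex.cosh d = 0) :
    SemiconjBy (NormedSpace.exp (d • z)) x (-x) := by
  have hmove : x * NormedSpace.exp (-d • z) = NormedSpace.exp (d • z) * x :=
    semiconjBy_exp_right <| by
      simpa only [smul_neg, ← neg_smul, neg_neg] using hanti.smul_right (-d)
  calc NormedSpace.exp (d • z) * x
      = -(Complex.sinh d • (x * z)) := by
        rw [← hmove, mul_exp_smul_of_mul_sq_eq_self hsq, Complex.cosh_neg, hd, Complex.sinh_neg,
          zero_smul, zero_add, neg_smul]
    _ = -x * NormedSpace.exp (d • z) := by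
        rw [neg_mul, mul_exp_smul_of_mul_sq_eq_self hsq, hd, zero_smul, zero_add]

theorem exp_smul_mul_of_semiconjBy_neg {v x : 𝔸} (h : SemiconjBy v x (-x)) (c : ℂ) :
    NormedSpace.exp (c • x) * v
      = NormedSpace.exp ((2 * c) • x) * v * NormedSpace.exp (c • x) := by
  let : NormedAlgebra ℚ 𝔸 := NormedAlgebra.restrictScalars ℚ ℂ 𝔸
  have hmove : v * NormedSpace.exp (c • x) = NormedSpace.exp (-c • x) * v :=
    semiconjBy_exp_right <| by
      simpa only [smul_neg, ← neg_smul] using h.smul_right c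
  have hcomm : Commute ((2 * c) • x) (-c • x) :=
    ((Commute.refl x).smul_left _).smul_right _
  rw [mul_assoc, hmove, ← mul_assoc, ← NormedSpace.exp_add_of_commute hcomm, ← add_smul]
  congr 3
  ring

theorem exp_smul_mul_exp_smul_of_cosh_eq_zero {x z : 𝔸} {d : ℂ} (hanti : SemiconjBy x z (-z))
    (hsq : x * z ^ 2 = x) (hd : Complex.cosh d = 0) (c : ℂ) :
    NormedSpace.exp (c • x) * NormedSpace.exp (d • z)
      = NormedSpace.exp ((2 * c) • x) * NormedSpace.exp (d • z) * NormedSpace.exp (c • x) :=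
  exp_smul_mul_of_semiconjBy_neg (exp_smul_semiconjBy_neg_of_cosh_eq_zero hanti hsq hd) c

end BanachAlgebra

section MatrixExponential

variable {m n : Type*} [Fintype m] [DecidableEq m] [Fintype n] [DecidableEq n]

-- Matrices carry no global norm; the topology of the operator norm agrees with the entrywise one
-- only after unfolding instances.
theorem matrix_exp_smul_mul_exp_smul_of_cosh_eq_zero {X Z : Matrix n n ℂ} {d : ℂ}
    (hanti : SemiconjBy X Z (-Z)) (hsq : X * Z ^ 2 = X) (hd : Complex.cosh d = 0) (c : ℂ) :
    NormedSpace.exp (c • X) * NormedSpace.exp (d • Z)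
      = NormedSpace.exp ((2 * c) • X) * NormedSpace.exp (d • Z) * NormedSpace.exp (c • X) := by
  open scoped Norms.Operator in
  with_unfolding_all exact exp_smul_mul_exp_smul_of_cosh_eq_zero hanti hsq hd c

theorem algHom_matrix_exp (φ : Matrix m m ℂ →ₐ[ℂ] Matrix n n ℂ) (A : Matrix m m ℂ) :
    φ (NormedSpace.exp A) = NormedSpace.exp (φ A) := by
  have hφ : Continuous φ := φ.toLinearMap.continuous_of_finiteDimensional
  open scoped Norms.Operator in
  with_unfolding_all exact NormedSpace.map_exp φ hφ A

end MatrixExponential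

section TensorProduct

variable {ι R : Type*} [Fintype ι] [CommSemiring R] {n : ι → Type*} [∀ i, Fintype (n i)]
  [∀ i, DecidableEq (n i)]

/-- The tensor product `⨂ᵢ Mᵢ` of a family of square matrices, as a monoid homomorphism. The product
basis is indexed by functions, as in `Op`. -/
def tensorHom [DecidableEq ι] :
    (∀ i, Matrix (n i) (n i) R) →* Matrix (∀ i, n i) (∀ i, n i) R where
  toFun M := Matrix.of fun f g => ∏ i, M i (f i) (g i)
  map_one' := by
    ext f g
    simp [Matrix.one_apply, Finset.prod_ite_zero, funext_iff]
  map_mul' M N := by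
    ext f g
    simp only [Matrix.of_apply, Pi.mul_apply, Matrix.mul_apply, Finset.prod_univ_sum,
      Fintype.piFinset_univ, Finset.prod_mul_distrib]

theorem tensorHom_apply [DecidableEq ι] (M : ∀ i, Matrix (n i) (n i) R) (f g : ∀ i, n i) :
    tensorHom M f g = ∏ i, M i (f i) (g i) :=
  rfl

end TensorProduct

theorem list_prod_finRange_mulSingle {L : ℕ} {M : Fin L → Type*} [∀ j, Monoid (M j)]
    (x : ∀ j, M j) : ((List.finRange L).map fun j => Pi.mulSingle j (x j)).prod = x := by
  rw [← Finset.noncommProd_toFinset _ _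
    (fun i _ j _ _ => Pi.mulSingle_apply_commute x i j) (List.nodup_finRange L)]
  simp only [List.toFinset_finRange, Finset.noncommProd_mulSingle]

section Sites

variable {L : ℕ}

theorem site_eq_tensorHom_mulSingle (A : Matrix (Fin 3) (Fin 3) ℂ) (j : Fin L) :
    site A j = tensorHom (Pi.mulSingle j A) := by
  ext f g
  rw [site, Matrix.of_apply, tensorHom_apply]
  refine Finset.prod_congr rfl fun k _ => ?_
  obtain rfl | hkj := eq_or_ne k j
  · simp
  · simp [hkj, Matrix.one_apply]

theorem site_apply (A : Matrix (Fin 3) (Fin 3) ℂ) (j : Fin L) (f g : Fin L → Fin 3) :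
    site A j f g = A (f j) (g j) * ∏ k ∈ Finset.univ.erase j, if f k = g k then 1 else 0 := by
  rw [site, Matrix.of_apply, ← Finset.mul_prod_erase _ _ (Finset.mem_univ j), if_pos rfl]
  congr 1
  exact Finset.prod_congr rfl fun k hk => if_neg (Finset.ne_of_mem_erase hk)

/-- The embedding `A ↦ A_j` of one-site operators into chain operators, as an algebra homomorphism;
it is what carries one-site exponentials to chain exponentials. -/
def siteAlgHom (j : Fin L) : Matrix (Fin 3) (Fin 3) ℂ →ₐ[ℂ] Op L :=
  AlgHom.ofLinearMap
    { toFun := fun A => site A j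
      map_add' := fun A B => by ext f g; simp only [site_apply, Matrix.add_apply, add_mul]
      map_smul' := fun c A => by
        ext f g
        simp only [site_apply, Matrix.smul_apply, smul_eq_mul, mul_assoc, RingHom.id_apply] }
    (by simp [site_eq_tensorHom_mulSingle])
    (fun A B => by simp [site_eq_tensorHom_mulSingle, Pi.mulSingle_mul])

theorem siteAlgHom_apply (j : Fin L) (A : Matrix (Fin 3) (Fin 3) ℂ) :
    siteAlgHom j A = site A j :=
  rfl

theorem exp_smul_site (c : ℂ) (A : Matrix (Fin 3) (Fin 3) ℂ) (j : Fin L) :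
    NormedSpace.exp (c • site A j) = site (NormedSpace.exp (c • A)) j := by
  rw [← siteAlgHom_apply, ← siteAlgHom_apply, ← map_smul, algHom_matrix_exp]

theorem globalProd_eq_tensorHom (A : Matrix (Fin 3) (Fin 3) ℂ) (c : ℂ) :
    globalProd L A c = tensorHom fun _ => NormedSpace.exp (c • A) := by
  simp only [globalProd, exp_smul_site]
  rw [← list_prod_finRange_mulSingle fun _ : Fin L => NormedSpace.exp (c • A), map_list_prod,
    List.map_map]
  simp only [site_eq_tensorHom_mulSingle, Function.comp_def]

end Sites

section PWaveBasis

theorem inv_sqrt_two_mul_self :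
    ((Real.sqrt 2 : ℝ) : ℂ)⁻¹ * ((Real.sqrt 2 : ℝ) : ℂ)⁻¹ = 2⁻¹ := by
  rw [← mul_inv, ← Complex.ofReal_mul, Real.mul_self_sqrt zero_le_two, Complex.ofReal_ofNat]

theorem star_up_dotProduct_up : star up ⬝ᵥ up = 1 := by
  have hhalves : (2⁻¹ : ℂ) + 2⁻¹ = 1 := by norm_num
  simp [up, dotProduct, Fin.sum_univ_three, inv_sqrt_two_mul_self, hhalves]

theorem star_down_dotProduct_down : star down ⬝ᵥ down = 1 := by
  simp [down, dotProduct, Fin.sum_univ_three]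

theorem star_up_dotProduct_down : star up ⬝ᵥ down = 0 := by
  simp [up, down, dotProduct, Fin.sum_univ_three]

theorem star_down_dotProduct_up : star down ⬝ᵥ up = 0 := by
  simp [up, down, dotProduct, Fin.sum_univ_three]

theorem ketbra_mul_ketbra (a b c d : Fin 3 → ℂ) :
    ketbra a b * ketbra c d = (star b ⬝ᵥ c) • ketbra a d := by
  simp only [ketbra, Matrix.vecMulVec_mul_vecMulVec, Matrix.vecMulVec_smul]

theorem Sy_eq_sigy : Sy = sigy := by
  ext i j
  fin_cases i <;> fin_cases j <;>
    simp only [Sy, sigy, ketbra, Matrix.add_apply, Matrix.smul_apply, Matrix.vecMulVec_apply] <;>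
    simp [up, down, mul_comm]

theorem sigy_semiconjBy_sigz_neg : SemiconjBy sigy sigz (-sigz) := by
  simp [SemiconjBy, add_comm, sigy, sigz, mul_add, add_mul, mul_sub, sub_mul, ketbra_mul_ketbra,
    star_up_dotProduct_up, star_down_dotProduct_down, star_up_dotProduct_down,
    star_down_dotProduct_up]

theorem sigy_mul_sigz_sq : sigy * sigz ^ 2 = sigy := by
  simp [sq, add_comm, sigy, sigz, mul_add, add_mul, mul_sub, sub_mul, ketbra_mul_ketbra,
    star_up_dotProduct_up, star_down_dotProduct_down, star_up_dotProduct_down,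
    star_down_dotProduct_up]

theorem exp_smul_Sy_mul_exp_smul_sigz {d : ℂ} (hd : Complex.cosh d = 0) (c : ℂ) :
    NormedSpace.exp (c • Sy) * NormedSpace.exp (d • sigz)
      = NormedSpace.exp ((2 * c) • Sy) * NormedSpace.exp (d • sigz)
        * NormedSpace.exp (c • Sy) := by
  rw [Sy_eq_sigy]
  exact matrix_exp_smul_mul_exp_smul_of_cosh_eq_zero sigy_semiconjBy_sigz_neg sigy_mul_sigz_sq hd c

end PWaveBasis

theorem Yprime_Zprime_identity_general (L : ℕ) {d : ℂ} (hd : Complex.cosh d = 0) (c : ℂ) :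
    globalProd L Sy c * globalProd L sigz d
      = globalProd L Sy (2 * c) * globalProd L sigz d * globalProd L Sy c := by
  simp only [globalProd_eq_tensorHom, ← map_mul]
  exact congrArg tensorHom (funext fun _ => exp_smul_Sy_mul_exp_smul_sigz hd c)

theorem cosh_neg_half_pi_mul_I : Complex.cosh (-(((Real.pi / 2 : ℝ) : ℂ) * I)) = 0 := by
  rw [Complex.cosh_neg, Complex.cosh_mul_I, ← Complex.ofReal_cos, Real.cos_pi_div_two,
    Complex.ofReal_zero]

theorem neg_pi_mul_I_eq_two_mul :
    -((Real.pi : ℂ) * I) = 2 * -(((Real.pi / 2 : ℝ) : ℂ) * I) := by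
  push_cast
  ring

/-- With `Y_π = ∏_j exp(−iπSʸ_j)`, `Y'_π = ∏_j exp(−i(π/2)Sʸ_j)`, and
`Z'_π = ∏_j exp(−i(π/2)σᶻ_j)`, the operator identity `Y'_π Z'_π = Y_π Z'_π Y'_π` holds on
`(ℂ³)^{⊗L}`. -/
theorem Yprime_Zprime_identity (L : ℕ) (hL : 1 ≤ L) :
    globalProd L Sy (-(((Real.pi / 2 : ℝ) : ℂ) * I)) *
        globalProd L sigz (-(((Real.pi / 2 : ℝ) : ℂ) * I)) =
      globalProd L Sy (-((Real.pi : ℂ) * I)) *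
        globalProd L sigz (-(((Real.pi / 2 : ℝ) : ℂ) * I)) *
        globalProd L Sy (-(((Real.pi / 2 : ℝ) : ℂ) * I)) := by
  rw [neg_pi_mul_I_eq_two_mul]
  exact Yprime_Zprime_identity_general L cosh_neg_half_pi_mul_I _

end
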